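/- arXiv:1507.07831 — 2 statements merged into one kernel-verified Lean document; each statement's English description precedes it below -/
import Mathlib

section
/- Principal-value formula for the derivative of the single-layer-type operator in a chart: let d ≥ 3, γ ∈ (0,1), μ ≥ 1, r₀ > 0, a₀ ∈ ℝ^{d-1}, and let Z : B(a₀, 6r₀) ⊂ ℝ^{d-1} → ℝ^d be continuously differentiable with (1/μ)|a-b| ≤ |Z(a)-Z(b)| for all a,b, and with γ-Hölder derivative DZ. Set M(a,b) = |Z(a)-Z(b)|^{2-d}, and for a γ-Hölder function f compactly supported in B(a₀, 3r₀) define Tf(a) = ∫_{B(a₀,6r₀)} M(a,b) f(b) db. Then for each 1 ≤ j ≤ d-1 and each a, the principal value p.v. ∫_{B(a₀,6r₀)} ∂M/∂a_j(a,b) f(b) db := lim_{ε↓0} ∫_{{b : |b-a|>ε}} ∂M/∂a_j(a,b) f(b) db exists, where ∂M/∂a_j(a,b) = (2-d)(Z(a)-Z(b))·∂_j Z(a) / |Z(a)-Z(b)|^d, and it equals the distributional partial derivative ∂_j Tf on B(a₀,6r₀): for every smooth g compactly supported in B(a₀,6r₀), -∫ Tf(a) ∂_j g(a) da = ∫ (p.v.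 ∫ ∂M/∂a_j(a,b) f(b) db) g(a) da. -/
open MeasureTheory Metric Set
open scoped RealInnerProductSpace

open Filter Function Module
open scoped NNReal Topology

/-!
Replacing `|u|` by `√(|u|² + ε²)` in the kernels makes them nonsingular, and Fubini together with
integration by parts then gives the weak derivative identity. As `ε → 0`, the gradient kernel is
not absolutely integrable at `b = a`, but it is odd to leading order: by the Hölder continuity of
`DZ` and `f`, its average over the reflection `a + h ↦ a - h` is `O(|h| ^ (γ - (d - 1)))`, which is
integrable in dimension `d - 1`. Hence truncating at `|b - a| = ε` and regularizing at scale `ε`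
have the same limit, the integral of this average, and the convergence is dominated locally
uniformly in `a`.
-/

section SymmetrizedIntegral

variable {E : Type*} [NormedAddCommGroup E]

/-- The domination under which `symmetrizedIntegral` converges: away from `a` the function is
bounded by `C₁` and lives on `S`, while near `a` only the sum of its values at opposite points is
controlled, by `C₂ * ‖h‖ ^ (-α)`. -/
structure SymmetrizedBound (S : Set E) (α C₁ C₂ r : ℝ) (a : E) (G : E → ℝ) : Prop where
  far : ∀ b ∉ ball a r, |G b| ≤ S.indicator (fun _ => C₁) b
  near : ∀ h ∈ ball (0 : E) r, h ≠ 0 → |G (a + h) + G (a - h)| ≤ C₂ * ‖h‖ ^ (-α)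

lemma SymmetrizedBound.indicator_compl_ball {S : Set E} {α C₁ C₂ r : ℝ} {a : E} {G : E → ℝ}
    (hG : SymmetrizedBound S α C₁ C₂ r a G) (ε : ℝ) :
    SymmetrizedBound S α C₁ C₂ r a ((ball a ε)ᶜ.indicator G) where
  far b hb := (norm_indicator_le_norm_self G b).trans (hG.far b hb)
  near h hh h0 := by
    have hnear := hG.near h hh h0
    by_cases hε : ‖h‖ < ε
    · simpa [indicator, hε] using (abs_nonneg _).trans hnear
    · simpa [indicator, hε] using hnear

variable [MeasurableSpace E]

/-- The integral of `G` with the contribution of `ball a r` averaged over the reflection through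
`a`. It agrees with `∫ b, G b ∂ν` for integrable `G`, and it still makes sense when the singularity
of `G` at `a` is integrable only after cancellation of odd parts. -/
noncomputable def symmetrizedIntegral (ν : Measure E) (G : E → ℝ) (a : E) (r : ℝ) : ℝ :=
  ∫ b in (ball a r)ᶜ, G b ∂ν + 2⁻¹ * ∫ h in ball 0 r, (G (a + h) + G (a - h)) ∂ν

variable [BorelSpace E] {ν : Measure E}

lemma integral_eq_symmetrizedIntegral [ν.IsAddLeftInvariant] [ν.IsNegInvariant] {G : E → ℝ}
    (hG : Integrable G ν) (a : E) (r : ℝ) : ∫ b, G b ∂ν = symmetrizedIntegral ν G a r := by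
  have h_add : ∫ h in ball 0 r, G (a + h) ∂ν = ∫ b in ball a r, G b ∂ν := by
    simpa using (measurePreserving_add_left ν a).setIntegral_preimage_emb
      (measurableEmbedding_addLeft a) G (ball a r)
  have h_sub : ∫ h in ball 0 r, G (a - h) ∂ν = ∫ b in ball a r, G b ∂ν := by
    have hpre : (fun h => a - h) ⁻¹' ball a r = ball 0 r := by ext h; simp
    simpa [hpre] using (Measure.measurePreserving_sub_left ν a).setIntegral_preimage_emb
      (MeasurableEquiv.subLeft a).measurableEmbedding G (ball a r)
  rw [symmetrizedIntegral, integral_add (hG.comp_add_left a).integrableOn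
    (hG.comp_sub_left a).integrableOn, h_add, h_sub, ← integral_add_compl measurableSet_ball hG]
  ring

variable [NormedSpace ℝ E] [FiniteDimensional ℝ E] [ν.IsAddHaarMeasure] [Nontrivial E]

lemma integrableOn_ball_norm_rpow_neg {α : ℝ} (hα : α < finrank ℝ E) (r : ℝ) :
    IntegrableOn (fun h : E => ‖h‖ ^ (-α)) (ball 0 r) ν :=
  integrableOn_ball_of_norm_le_rpow (C := 1) finrank_pos hα
    (Eventually.of_forall fun h => by rw [one_mul, Real.norm_of_nonneg (by positivity)])
    (measurable_norm.pow_const _).aestronglyMeasurable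

namespace SymmetrizedBound

variable {S : Set E} {α C₁ C₂ r : ℝ} {a : E}

lemma abs_integral_le {G : E → ℝ} (hbound : SymmetrizedBound S α C₁ C₂ r a G)
    (hS : MeasurableSet S) (hνS : ν S ≠ ⊤) (hα : α < finrank ℝ E) (hC₁ : 0 ≤ C₁)
    (hG : Integrable G ν) :
    |∫ b, G b ∂ν| ≤ C₁ * ν.real S + 2⁻¹ * (C₂ * ∫ h in ball (0 : E) r, ‖h‖ ^ (-α) ∂ν) := by
  have hind : Integrable (S.indicator fun _ => C₁) ν :=
    (integrable_indicator_iff hS).2 (integrableOn_const hνS)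
  have hfar : |∫ b in (ball a r)ᶜ, G b ∂ν| ≤ C₁ * ν.real S := calc
    _ ≤ ∫ b in (ball a r)ᶜ, S.indicator (fun _ => C₁) b ∂ν :=
      norm_integral_le_of_norm_le (f := G) hind.integrableOn
        ((ae_restrict_mem measurableSet_ball.compl).mono hbound.far)
    _ ≤ ∫ b, S.indicator (fun _ => C₁) b ∂ν :=
      setIntegral_le_integral hind
        (Eventually.of_forall fun b => indicator_nonneg (fun _ _ => hC₁) b)
    _ = C₁ * ν.real S := by rw [integral_indicator_const _ hS, smul_eq_mul, mul_comm]
  have hnear : |∫ h in ball 0 r, (G (a + h) + G (a - h)) ∂ν|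
      ≤ C₂ * ∫ h in ball (0 : E) r, ‖h‖ ^ (-α) ∂ν := by
    rw [← integral_const_mul, ← Real.norm_eq_abs]
    refine norm_integral_le_of_norm_le ((integrableOn_ball_norm_rpow_neg hα r).const_mul C₂) ?_
    filter_upwards [ae_restrict_mem measurableSet_ball, ae_restrict_of_ae (Measure.ae_ne ν 0)]
      with h hh h0 using hbound.near h hh h0
  rw [integral_eq_symmetrizedIntegral hG a r]
  refine (abs_add_le _ _).trans (add_le_add hfar ?_)
  rw [abs_mul, abs_of_pos (by norm_num : (0 : ℝ) < 2⁻¹)]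
  gcongr

variable {ι : Type*} {l : Filter ι} [l.IsCountablyGenerated] {G : ι → E → ℝ} {G₀ : E → ℝ}

/-- The cancellation of odd parts is what allows dominated convergence at the singularity. -/
lemma tendsto_integral (hbound : ∀ᶠ i in l, SymmetrizedBound S α C₁ C₂ r a (G i))
    (hr : 0 < r) (hS : MeasurableSet S) (hνS : ν S ≠ ⊤) (hα : α < finrank ℝ E)
    (hG : ∀ᶠ i in l, Integrable (G i) ν)
    (hlim : ∀ b ≠ a, Tendsto (fun i => G i b) l (𝓝 (G₀ b))) :
    Tendsto (fun i => ∫ b, G i b ∂ν) l (𝓝 (symmetrizedIntegral ν G₀ a r)) := by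
  have hfar : Tendsto (fun i => ∫ b in (ball a r)ᶜ, G i b ∂ν) l
      (𝓝 (∫ b in (ball a r)ᶜ, G₀ b ∂ν)) := by
    refine tendsto_integral_filter_of_dominated_convergence (S.indicator fun _ => C₁)
      (hG.mono fun i hi => hi.1.restrict)
      (hbound.mono fun i hi => (ae_restrict_mem measurableSet_ball.compl).mono hi.far)
      ((integrable_indicator_iff hS).2 (integrableOn_const hνS)).integrableOn ?_
    filter_upwards [ae_restrict_mem measurableSet_ball.compl] with b hb
    exact hlim b fun hba => hb (hba ▸ mem_ball_self hr)
  have hne : ∀ᵐ h ∂ν.restrict (ball (0 : E) r), h ≠ 0 := ae_restrict_of_ae (Measure.ae_ne ν 0)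
  have hnear : Tendsto (fun i => ∫ h in ball 0 r, (G i (a + h) + G i (a - h)) ∂ν) l
      (𝓝 (∫ h in ball 0 r, (G₀ (a + h) + G₀ (a - h)) ∂ν)) := by
    refine tendsto_integral_filter_of_dominated_convergence (fun h => C₂ * ‖h‖ ^ (-α))
      (hG.mono fun i hi => ((hi.comp_add_left a).add (hi.comp_sub_left a)).1.restrict) ?_
      ((integrableOn_ball_norm_rpow_neg hα r).const_mul C₂) ?_
    · filter_upwards [hbound] with i hi
      filter_upwards [ae_restrict_mem measurableSet_ball, hne] with h hh h0 using hi.near h hh h0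
    · filter_upwards [hne] with h h0
      exact (hlim _ (by simpa using h0)).add (hlim _ (by simpa using h0))
  refine (hfar.add (hnear.const_mul 2⁻¹)).congr' (hG.mono fun i hi => ?_)
  exact (integral_eq_symmetrizedIntegral hi a r).symm

end SymmetrizedBound

end SymmetrizedIntegral

section RegularizedKernels

variable {F : Type*} [NormedAddCommGroup F]

/-- The norm smoothed at the origin, which regularizes the kernels for `ε ≠ 0`. -/
noncomputable def regNorm (ε : ℝ) (u : F) : ℝ := √(‖u‖ ^ 2 + ε ^ 2)

@[simp]
lemma regNorm_zero_left (u : F) : regNorm 0 u = ‖u‖ := by simp [regNorm]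

@[simp]
lemma regNorm_neg (ε : ℝ) (u : F) : regNorm ε (-u) = regNorm ε u := by simp [regNorm]

lemma regNorm_eq_norm_toLp (ε : ℝ) (u : F) : regNorm ε u = ‖WithLp.toLp 2 (u, ε)‖ := by
  simp [regNorm, WithLp.prod_norm_eq_of_L2]

lemma norm_le_regNorm (ε : ℝ) (u : F) : ‖u‖ ≤ regNorm ε u :=
  Real.le_sqrt_of_sq_le (le_add_of_nonneg_right (sq_nonneg ε))

lemma regNorm_pos {ε : ℝ} (hε : ε ≠ 0) (u : F) : 0 < regNorm ε u := by
  unfold regNorm; positivity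

lemma abs_regNorm_sub_le (ε : ℝ) (u v : F) : |regNorm ε u - regNorm ε v| ≤ ‖u - v‖ := by
  simpa [regNorm_eq_norm_toLp, ← WithLp.toLp_sub, WithLp.prod_norm_eq_of_L2] using
    abs_norm_sub_norm_le (WithLp.toLp 2 (u, ε)) (WithLp.toLp 2 (v, ε))

lemma continuous_regNorm : Continuous fun p : ℝ × F => regNorm p.1 p.2 := by
  unfold regNorm; fun_prop

/-- The kernel `‖u‖ ^ (2 - d)` of the single layer, with the norm regularized at scale `ε`. -/
noncomputable def layerKernel (d : ℕ) (ε : ℝ) (u : F) : ℝ := regNorm ε u ^ (2 - (d : ℝ))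

lemma continuousAt_layerKernel (d : ℕ) {ε : ℝ} {u : F} (h : regNorm ε u ≠ 0) :
    ContinuousAt (fun p : ℝ × F => layerKernel d p.1 p.2) (ε, u) :=
  continuous_regNorm.continuousAt.rpow_const (Or.inl h)

lemma abs_layerKernel_le {d : ℕ} (hd : 2 ≤ d) (ε : ℝ) {u : F} {t : ℝ} (ht : 0 < t)
    (hu : t ≤ ‖u‖) : |layerKernel d ε u| ≤ t ^ (2 - (d : ℝ)) := by
  have htu : t ≤ regNorm ε u := hu.trans (norm_le_regNorm ε u)
  have hd' : (2 : ℝ) ≤ d := by exact_mod_cast hd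
  rw [layerKernel, abs_of_nonneg (Real.rpow_nonneg (ht.le.trans htu) _)]
  exact Real.rpow_le_rpow_of_nonpos ht htu (by linarith)

variable [InnerProductSpace ℝ F]

/-- The derivative of `layerKernel d ε` at `u` in the direction `w`. -/
noncomputable def layerGradKernel (d : ℕ) (ε : ℝ) (w u : F) : ℝ :=
  (2 - (d : ℝ)) * ⟪u, w⟫ / regNorm ε u ^ d

@[simp]
lemma layerGradKernel_neg (d : ℕ) (ε : ℝ) (w u : F) :
    layerGradKernel d ε w (-u) = -layerGradKernel d ε w u := by
  simp [layerGradKernel, neg_div]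

lemma continuousAt_layerGradKernel (d : ℕ) {ε : ℝ} {w u : F} (h : regNorm ε u ≠ 0) :
    ContinuousAt (fun p : ℝ × F × F => layerGradKernel d p.1 p.2.1 p.2.2) (ε, w, u) := by
  have hreg : Continuous fun p : ℝ × F × F => regNorm p.1 p.2.2 :=
    continuous_regNorm.comp (by fun_prop : Continuous fun p : ℝ × F × F => (p.1, p.2.2))
  exact ContinuousAt.div (by fun_prop) (hreg.pow d).continuousAt (pow_ne_zero d h)

lemma hasLineDerivAt_layerKernel_sub {E : Type*} [NormedAddCommGroup E] [NormedSpace ℝ E] (d : ℕ)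
    {ε : ℝ} (hε : ε ≠ 0) {Z : E → F} {a : E} (hZ : DifferentiableAt ℝ Z a) (c : F) (v : E) :
    HasLineDerivAt ℝ (fun x => layerKernel d ε (Z x - c))
      (layerGradKernel d ε (fderiv ℝ Z a v) (Z a - c)) a v := by
  have hsqrt (u : F) (p : ℝ) : regNorm ε u ^ p = (‖u‖ ^ 2 + ε ^ 2) ^ (p / 2) := by
    rw [regNorm, Real.sqrt_eq_rpow, ← Real.rpow_mul (by positivity), one_div_mul_eq_div]
  have hpos : 0 < ‖Z a - c‖ ^ 2 + ε ^ 2 := by positivity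
  have hderiv := (((hZ.hasFDerivAt.sub_const c).norm_sq.add_const (ε ^ 2)).rpow_const
    (p := (2 - (d : ℝ)) / 2) (Or.inl hpos.ne')).hasLineDerivAt v
  have hpow : (‖Z a - c‖ ^ 2 + ε ^ 2) ^ ((2 - (d : ℝ)) / 2 - 1) = (regNorm ε (Z a - c) ^ d)⁻¹ := by
    rw [← Real.rpow_natCast (regNorm ε (Z a - c)), ← Real.rpow_neg (regNorm_pos hε _).le, hsqrt]
    congr 1; ring
  simp only [layerKernel, hsqrt]
  convert hderiv using 1
  simp [hpow, layerGradKernel, inner_sub_left]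
  ring

lemma abs_layerGradKernel_le {d : ℕ} (hd : 1 ≤ d) (ε : ℝ) (w : F) {u : F} {t : ℝ} (ht : 0 < t)
    (hu : t ≤ ‖u‖) : |layerGradKernel d ε w u| ≤ |2 - (d : ℝ)| * ‖w‖ * (t / t ^ d) := by
  obtain ⟨k, rfl⟩ : ∃ k, d = k + 1 := ⟨d - 1, by omega⟩
  have hus := norm_le_regNorm ε u
  have hs : 0 < regNorm ε u := (ht.trans_le hu).trans_le hus
  rw [layerGradKernel, abs_div, abs_mul, abs_of_pos (pow_pos hs _), mul_div_assoc, mul_assoc]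
  gcongr
  rw [mul_div, div_le_div_iff₀ (pow_pos hs _) (pow_pos ht _)]
  calc |⟪u, w⟫| * t ^ (k + 1) ≤ (‖u‖ * ‖w‖) * t ^ (k + 1) := by
        gcongr; exact abs_real_inner_le_norm u w
    _ ≤ (regNorm ε u * ‖w‖) * (t * regNorm ε u ^ k) := by
        rw [pow_succ']; gcongr; exact hu.trans hus
    _ = ‖w‖ * t * regNorm ε u ^ (k + 1) := by ring

lemma abs_pow_sub_pow_mul_le {s t : ℝ} (ht : 0 ≤ t) (hts : t ≤ s) (n : ℕ) :
    |s ^ n - t ^ n| * s ≤ |s - t| * n * s ^ n := by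
  have hs : 0 ≤ s := ht.trans hts
  have hle := abs_pow_sub_pow_le s t n
  rw [abs_of_nonneg hs, abs_of_nonneg ht, max_eq_left hts] at hle
  calc |s ^ n - t ^ n| * s ≤ (|s - t| * n * s ^ (n - 1)) * s := by gcongr
    _ = |s - t| * n * s ^ n := by cases n <;> simp [pow_succ, mul_assoc]

lemma abs_layerGradKernel_sub_le (d : ℕ) (ε : ℝ) (w : F) {u v : F} {t : ℝ} (ht : 0 < t)
    (hu : t ≤ ‖u‖) (hv : t ≤ ‖v‖) :
    |layerGradKernel d ε w u - layerGradKernel d ε w v|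
      ≤ |2 - (d : ℝ)| * ‖w‖ * ((1 + d) * ‖u - v‖ / t ^ d) := by
  wlog huv : regNorm ε v ≤ regNorm ε u generalizing u v
  · rw [abs_sub_comm, norm_sub_rev]
    exact this hv hu (le_of_not_ge huv)
  have hvs := norm_le_regNorm ε v
  set s := regNorm ε u
  set s' := regNorm ε v
  have hs' : 0 < s' := (ht.trans_le hv).trans_le hvs
  have hs : 0 < s := hs'.trans_le huv
  have hpow : |s ^ d - s' ^ d| * s ≤ ‖u - v‖ * d * s ^ d :=
    (abs_pow_sub_pow_mul_le hs'.le huv d).trans (by gcongr; exact abs_regNorm_sub_le ε u v)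
  have hnum : |⟪u - v, w⟫ / s ^ d| ≤ ‖w‖ * ‖u - v‖ / t ^ d := by
    rw [abs_div, abs_of_pos (pow_pos hs d), mul_comm ‖w‖]
    gcongr
    · exact abs_real_inner_le_norm _ _
    · exact (hv.trans hvs).trans huv
  have hden : |⟪v, w⟫ * (s ^ d - s' ^ d) / (s ^ d * s' ^ d)| ≤ ‖w‖ * d * ‖u - v‖ / t ^ d := by
    rw [abs_div, abs_of_pos (by positivity : 0 < s ^ d * s' ^ d), abs_mul,
      div_le_div_iff₀ (by positivity) (by positivity)]
    calc |⟪v, w⟫| * |s ^ d - s' ^ d| * t ^ d ≤ (s * ‖w‖) * |s ^ d - s' ^ d| * s' ^ d := by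
          gcongr
          · exact (abs_real_inner_le_norm _ _).trans (by gcongr; exact hvs.trans huv)
          · exact hv.trans hvs
      _ = ‖w‖ * (|s ^ d - s' ^ d| * s) * s' ^ d := by ring
      _ ≤ ‖w‖ * (‖u - v‖ * d * s ^ d) * s' ^ d := by gcongr
      _ = ‖w‖ * d * ‖u - v‖ * (s ^ d * s' ^ d) := by ring
  have hsplit : layerGradKernel d ε w u - layerGradKernel d ε w v = (2 - (d : ℝ)) *
      (⟪u - v, w⟫ / s ^ d - ⟪v, w⟫ * (s ^ d - s' ^ d) / (s ^ d * s' ^ d)) := by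
    change (2 - (d : ℝ)) * ⟪u, w⟫ / s ^ d - (2 - (d : ℝ)) * ⟪v, w⟫ / s' ^ d = _
    rw [inner_sub_left]
    field_simp
    ring
  calc |layerGradKernel d ε w u - layerGradKernel d ε w v|
      ≤ |2 - (d : ℝ)| * (‖w‖ * ‖u - v‖ / t ^ d + ‖w‖ * d * ‖u - v‖ / t ^ d) := by
        rw [hsplit, abs_mul]
        gcongr
        exact (abs_sub _ _).trans (add_le_add hnum hden)
    _ = |2 - (d : ℝ)| * ‖w‖ * ((1 + d) * ‖u - v‖ / t ^ d) := by ring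

/-- As the kernel is odd, its values at `u` and `v` nearly cancel when `u + v` is small. -/
lemma abs_layerGradKernel_mul_add_le {d : ℕ} (hd : 1 ≤ d) (ε : ℝ) (w : F) {u v : F} {t : ℝ}
    (ht : 0 < t) (hu : t ≤ ‖u‖) (hv : t ≤ ‖v‖) (p q : ℝ) :
    |layerGradKernel d ε w u * p + layerGradKernel d ε w v * q|
      ≤ |2 - (d : ℝ)| * ‖w‖ * ((t * |p - q| + (1 + d) * ‖u + v‖ * |q|) / t ^ d) := by
  have hdiff := abs_layerGradKernel_sub_le d ε w (v := -v) ht hu (by rwa [norm_neg])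
  rw [layerGradKernel_neg, sub_neg_eq_add, sub_neg_eq_add] at hdiff
  calc |layerGradKernel d ε w u * p + layerGradKernel d ε w v * q|
      = |layerGradKernel d ε w u * (p - q)
          + (layerGradKernel d ε w u + layerGradKernel d ε w v) * q| := by ring_nf
    _ ≤ |2 - (d : ℝ)| * ‖w‖ * (t / t ^ d) * |p - q|
          + |2 - (d : ℝ)| * ‖w‖ * ((1 + d) * ‖u + v‖ / t ^ d) * |q| := by
        refine (abs_add_le _ _).trans ?_
        rw [abs_mul, abs_mul]
        gcongr
        exact abs_layerGradKernel_le hd ε w ht hu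
    _ = _ := by ring

end RegularizedKernels

section WeakDerivative

section Integrability

variable {X Y : Type*} [TopologicalSpace X] [MeasurableSpace X]
  [OpensMeasurableSpace X] [T2Space X] {μ : Measure X} [IsFiniteMeasureOnCompacts μ]

lemma integrable_mul_of_continuousOn {K : Set X} (hK : IsCompact K) {φ g : X → ℝ}
    (hφ : ContinuousOn φ K) (hg : Continuous g) (hgK : support g ⊆ K) :
    Integrable (fun x => φ x * g x) μ :=
  (integrableOn_iff_integrable_of_support_subset ((support_mul_subset_right φ g).trans hgK)).1
    ((hφ.mul hg.continuousOn).integrableOn_compact hK)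

lemma tendsto_integral_mul_of_dominated {ι : Type*} {l : Filter ι} [l.IsCountablyGenerated]
    {K : Set X} (hK : IsCompact K) {g : X → ℝ} (hg : Continuous g) (hgK : support g ⊆ K)
    {u : ι → X → ℝ} {u₀ L : X → ℝ} (hL : ContinuousOn L K)
    (hmeas : ∀ᶠ i in l, AEStronglyMeasurable (fun a => u i a * g a) μ)
    (hbound : ∀ᶠ i in l, ∀ a ∈ K, |u i a| ≤ L a)
    (hlim : ∀ a ∈ K, Tendsto (fun i => u i a) l (𝓝 (u₀ a))) :
    Tendsto (fun i => ∫ a, u i a * g a ∂μ) l (𝓝 (∫ a, u₀ a * g a ∂μ)) := by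
  have hzero (a : X) (ha : a ∉ K) : g a = 0 := notMem_support.1 fun h => ha (hgK h)
  refine tendsto_integral_filter_of_dominated_convergence (fun a => L a * |g a|) hmeas
    (hbound.mono fun i hi => Eventually.of_forall fun a => ?_)
    (integrable_mul_of_continuousOn hK hL hg.abs (by simpa using hgK))
    (Eventually.of_forall fun a => ?_)
  · by_cases ha : a ∈ K
    · rw [norm_mul]
      exact mul_le_mul_of_nonneg_right (hi a ha) (abs_nonneg _)
    · simp [hzero a ha]
  · by_cases ha : a ∈ K
    · exact (hlim a ha).mul_const _
    · simpa [hzero a ha] using tendsto_const_nhds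

variable [TopologicalSpace Y] [MeasurableSpace Y] [OpensMeasurableSpace Y]
  [T2Space Y] [SecondCountableTopology Y] {ν : Measure Y} [IsFiniteMeasureOnCompacts ν]
  {k : X → Y → ℝ} {f : Y → ℝ} {g : X → ℝ}

lemma integrable_kernel_mul
    (hk : ContinuousOn (uncurry k) (tsupport g ×ˢ tsupport f))
    (hf : Continuous f) (hfc : HasCompactSupport f) (hg : Continuous g)
    (hgc : HasCompactSupport g) :
    Integrable (uncurry fun a b => k a b * f b * g a) (μ.prod ν) := by
  refine (integrable_mul_of_continuousOn (φ := uncurry k) (g := fun p => f p.2 * g p.1)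
    (hgc.isCompact.prod hfc.isCompact) hk (by fun_prop) fun p hp => ?_).congr
    (Eventually.of_forall fun p => (mul_assoc (k p.1 p.2) (f p.2) (g p.1)).symm)
  exact ⟨subset_tsupport g (right_ne_zero_of_mul hp), subset_tsupport f (left_ne_zero_of_mul hp)⟩

lemma aestronglyMeasurable_integral_kernel_mul [SFinite ν]
    (hk : ContinuousOn (uncurry k) (tsupport g ×ˢ tsupport f))
    (hf : Continuous f) (hfc : HasCompactSupport f) (hg : Continuous g)
    (hgc : HasCompactSupport g) :
    AEStronglyMeasurable (fun a => (∫ b, k a b * f b ∂ν) * g a) μ := by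
  simpa only [uncurry, integral_mul_const] using
    (integrable_kernel_mul (μ := μ) (ν := ν) hk hf hfc hg hgc).integral_prod_left.1

lemma integral_integral_kernel_mul_swap [SFinite μ] [SFinite ν]
    (hk : ContinuousOn (uncurry k) (tsupport g ×ˢ tsupport f))
    (hf : Continuous f) (hfc : HasCompactSupport f) (hg : Continuous g)
    (hgc : HasCompactSupport g) :
    ∫ a, (∫ b, k a b * f b ∂ν) * g a ∂μ = ∫ b, (∫ a, k a b * g a ∂μ) * f b ∂ν := by
  simp only [← integral_mul_const, mul_right_comm _ (g _) (f _)]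
  exact integral_integral_swap (integrable_kernel_mul hk hf hfc hg hgc)

end Integrability

variable {E : Type*} [NormedAddCommGroup E] [NormedSpace ℝ E] [FiniteDimensional ℝ E]
  [MeasurableSpace E] [BorelSpace E] {ν : Measure E} [ν.IsAddHaarMeasure] {g : E → ℝ} {v : E}

lemma neg_integral_mul_fderiv_apply {φ φ' : E → ℝ} (hφ : ContinuousOn φ (tsupport g))
    (hφ' : ContinuousOn φ' (tsupport g)) (hderiv : ∀ a ∈ tsupport g, HasLineDerivAt ℝ φ (φ' a) a v)
    (hg : ContDiff ℝ 1 g) (hgc : HasCompactSupport g) :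
    -∫ a, φ a * fderiv ℝ g a v ∂ν = ∫ a, φ' a * g a ∂ν := by
  have hfderiv : Continuous fun a => fderiv ℝ g a v :=
    (hg.continuous_fderiv one_ne_zero).clm_apply continuous_const
  have hsupp : support (fun a => fderiv ℝ g a v) ⊆ tsupport g :=
    (subset_tsupport _).trans (tsupport_fderiv_apply_subset ℝ v)
  rw [neg_eq_iff_eq_neg]
  exact integral_bilinear_hasLineDerivAt_right_eq_neg_left_of_integrable
    (B := ContinuousLinearMap.mul ℝ ℝ)
    (integrable_mul_of_continuousOn hgc.isCompact hφ' hg.continuous (subset_tsupport g))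
    (integrable_mul_of_continuousOn hgc.isCompact hφ hfderiv hsupp)
    (integrable_mul_of_continuousOn hgc.isCompact hφ hg.continuous (subset_tsupport g))
    hderiv fun a _ => (hg.differentiable one_ne_zero a).hasFDerivAt.hasLineDerivAt v

lemma neg_integral_kernel_mul_fderiv_apply {k k' : E → E → ℝ} {f : E → ℝ}
    (hk : ContinuousOn (uncurry k) (tsupport g ×ˢ tsupport f))
    (hk' : ContinuousOn (uncurry k') (tsupport g ×ˢ tsupport f))
    (hderiv : ∀ a ∈ tsupport g, ∀ b ∈ tsupport f, HasLineDerivAt ℝ (k · b) (k' a b) a v)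
    (hf : Continuous f) (hfc : HasCompactSupport f)
    (hg : ContDiff ℝ 1 g) (hgc : HasCompactSupport g) :
    -∫ a, (∫ b, k a b * f b ∂ν) * fderiv ℝ g a v ∂ν = ∫ a, (∫ b, k' a b * f b ∂ν) * g a ∂ν := by
  have hslice {κ : E → E → ℝ} (hκ : ContinuousOn (uncurry κ) (tsupport g ×ˢ tsupport f)) {b : E}
      (hb : b ∈ tsupport f) : ContinuousOn (κ · b) (tsupport g) :=
    hκ.comp (f := fun a => (a, b)) (by fun_prop) fun a ha => ⟨ha, hb⟩
  rw [integral_integral_kernel_mul_swap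
      (hk.mono (prod_mono (tsupport_fderiv_apply_subset ℝ v) subset_rfl)) hf hfc
      ((hg.continuous_fderiv one_ne_zero).clm_apply continuous_const) (hgc.fderiv_apply ℝ v),
    integral_integral_kernel_mul_swap hk' hf hfc hg.continuous hgc, ← integral_neg]
  refine integral_congr_ae (Eventually.of_forall fun b => ?_)
  by_cases hb : b ∈ tsupport f
  · simp only [← neg_mul]
    rw [neg_integral_mul_fderiv_apply (hslice hk hb) (hslice hk' hb) (fun a ha => hderiv a ha b hb)
      hg hgc]
  · simp [image_eq_zero_of_notMem_tsupport hb]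

end WeakDerivative

section Taylor

variable {E F : Type*} [NormedAddCommGroup E] [NormedSpace ℝ E]
  [NormedAddCommGroup F] [NormedSpace ℝ F] {Z : E → F} {a h : E} {γ H : ℝ≥0}

lemma norm_sub_sub_fderiv_le (hZ : ∀ x ∈ closedBall a ‖h‖, DifferentiableAt ℝ Z x)
    (hH : HolderOnWith H γ (fderiv ℝ Z) (closedBall a ‖h‖)) :
    ‖Z (a + h) - Z a - fderiv ℝ Z a h‖ ≤ H * ‖h‖ ^ (γ : ℝ) * ‖h‖ := by
  have ha : a ∈ closedBall a ‖h‖ := mem_closedBall_self (norm_nonneg h)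
  have hosc (x : E) (hx : x ∈ closedBall a ‖h‖) :
      ‖fderiv ℝ Z x - fderiv ℝ Z a‖ ≤ H * ‖h‖ ^ (γ : ℝ) := by
    rw [← dist_eq_norm]
    exact hH.dist_le_of_le hx ha hx
  simpa using (convex_closedBall a ‖h‖).norm_image_sub_le_of_norm_fderiv_le' hZ hosc ha
    (y := a + h) (by simp)

lemma norm_sub_add_sub_le (hZ : ∀ x ∈ closedBall a ‖h‖, DifferentiableAt ℝ Z x)
    (hH : HolderOnWith H γ (fderiv ℝ Z) (closedBall a ‖h‖)) :
    ‖(Z a - Z (a + h)) + (Z a - Z (a - h))‖ ≤ 2 * (H * ‖h‖ ^ (γ : ℝ) * ‖h‖) := by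
  have hadd := norm_sub_sub_fderiv_le hZ hH
  have hsub := norm_sub_sub_fderiv_le (h := -h) (by simpa using hZ) (by simpa using hH)
  rw [norm_neg, map_neg, ← sub_eq_add_neg] at hsub
  calc ‖(Z a - Z (a + h)) + (Z a - Z (a - h))‖
      = ‖(Z (a + h) - Z a - fderiv ℝ Z a h) + (Z (a - h) - Z a - -fderiv ℝ Z a h)‖ := by
        rw [← norm_neg]; congr 1; abel
    _ ≤ 2 * (H * ‖h‖ ^ (γ : ℝ) * ‖h‖) := by
        rw [two_mul]; exact norm_add_le_of_le hadd hsub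

end Taylor

section Chart

variable {E F : Type*} [NormedAddCommGroup E] [NormedAddCommGroup F]

/-- The integrand of the single layer operator at `a`, with density `f`, regularized at scale `ε`;
`ε = 0` gives the operator itself. -/
noncomputable def layerIntegrand (d : ℕ) (Z : E → F) (f : E → ℝ) (ε : ℝ) (a b : E) : ℝ :=
  layerKernel d ε (Z a - Z b) * f b

variable {γ : ℝ≥0} {Ω : Set E} {Z : E → F} {f : E → ℝ} {d : ℕ} {v a : E} {ε : ℝ}

lemma layerIntegrand_of_notMem {b : E} (hb : b ∉ tsupport f) :
    layerIntegrand d Z f ε a b = 0 := by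
  rw [layerIntegrand, image_eq_zero_of_notMem_tsupport hb, mul_zero]

variable [NormedSpace ℝ E] [InnerProductSpace ℝ F]

/-- A parametrization `Z` of a hypersurface patch by the open set `Ω`: it expands distances up to a
constant and its derivative is `γ`-Hölder. Only the restriction of `Z` to `Ω` matters. -/
structure IsHolderChart (γ : ℝ≥0) (Ω : Set E) (Z : E → F) : Prop where
  isOpen : IsOpen Ω
  differentiableAt : ∀ a ∈ Ω, DifferentiableAt ℝ Z a
  exists_le_norm_sub : ∃ c > 0, ∀ a ∈ Ω, ∀ b ∈ Ω, c * ‖a - b‖ ≤ ‖Z a - Z b‖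
  exists_holderOnWith : ∃ H, HolderOnWith H γ (fderiv ℝ Z) Ω

/-- The derivative of `layerIntegrand d Z f ε a b` in `a`, in the direction `v`. -/
noncomputable def layerGradIntegrand (d : ℕ) (Z : E → F) (f : E → ℝ) (v : E) (ε : ℝ) (a b : E) :
    ℝ :=
  layerGradKernel d ε (fderiv ℝ Z a v) (Z a - Z b) * f b

lemma layerGradIntegrand_of_notMem {b : E} (hb : b ∉ tsupport f) :
    layerGradIntegrand d Z f v ε a b = 0 := by
  rw [layerGradIntegrand, image_eq_zero_of_notMem_tsupport hb, mul_zero]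

namespace IsHolderChart

lemma continuousOn (hZ : IsHolderChart γ Ω Z) : ContinuousOn Z Ω := fun a ha =>
  (hZ.differentiableAt a ha).continuousAt.continuousWithinAt

lemma continuousOn_fderiv_apply (hZ : IsHolderChart γ Ω Z) (hγ : 0 < γ) (v : E) :
    ContinuousOn (fun a => fderiv ℝ Z a v) Ω :=
  have ⟨_, hH⟩ := hZ.exists_holderOnWith
  (hH.continuousOn hγ).clm_apply continuousOn_const

lemma sub_ne_zero (hZ : IsHolderChart γ Ω Z) {b : E} (ha : a ∈ Ω) (hb : b ∈ Ω) (hba : b ≠ a) :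
    Z a - Z b ≠ 0 := by
  obtain ⟨c, hc, hlow⟩ := hZ.exists_le_norm_sub
  have hab : 0 < ‖a - b‖ := norm_sub_pos_iff.2 hba.symm
  exact norm_pos_iff.1 ((mul_pos hc hab).trans_le (hlow a ha b hb))

lemma continuousOn_layerKernel (hZ : IsHolderChart γ Ω Z) {s : Set (E × E)} (hs : s ⊆ Ω ×ˢ Ω)
    (hreg : ∀ p ∈ s, regNorm ε (Z p.1 - Z p.2) ≠ 0) :
    ContinuousOn (uncurry fun a b => layerKernel d ε (Z a - Z b)) s := fun p hp =>
  (continuousAt_layerKernel d (hreg p hp)).comp_continuousWithinAt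
    (f := fun p : E × E => (ε, Z p.1 - Z p.2)) <| continuousWithinAt_const.prodMk <|
    ((hZ.continuousOn.comp continuousOn_fst fun _ hq => (hs hq).1).sub
      (hZ.continuousOn.comp continuousOn_snd fun _ hq => (hs hq).2)) p hp

lemma continuousOn_layerGradKernel (hZ : IsHolderChart γ Ω Z) (hγ : 0 < γ) {s : Set (E × E)}
    (hs : s ⊆ Ω ×ˢ Ω) (hreg : ∀ p ∈ s, regNorm ε (Z p.1 - Z p.2) ≠ 0) :
    ContinuousOn (uncurry fun a b => layerGradKernel d ε (fderiv ℝ Z a v) (Z a - Z b)) s :=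
  fun p hp => (continuousAt_layerGradKernel d (hreg p hp)).comp_continuousWithinAt
    (f := fun p : E × E => (ε, fderiv ℝ Z p.1 v, Z p.1 - Z p.2)) <|
    continuousWithinAt_const.prodMk <| ContinuousWithinAt.prodMk
      (((hZ.continuousOn_fderiv_apply hγ v).comp continuousOn_fst fun _ hq => (hs hq).1) p hp)
      (((hZ.continuousOn.comp continuousOn_fst fun _ hq => (hs hq).1).sub
        (hZ.continuousOn.comp continuousOn_snd fun _ hq => (hs hq).2)) p hp)

lemma tendsto_layerIntegrand (hZ : IsHolderChart γ Ω Z) (hfΩ : tsupport f ⊆ Ω) {b : E}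
    (ha : a ∈ Ω) (hba : b ≠ a) :
    Tendsto (fun ε => layerIntegrand d Z f ε a b) (𝓝[>] 0) (𝓝 (layerIntegrand d Z f 0 a b)) := by
  by_cases hb : b ∈ tsupport f
  · have hne : regNorm 0 (Z a - Z b) ≠ 0 := by simpa using hZ.sub_ne_zero ha (hfΩ hb) hba
    have hcont : ContinuousAt (fun ε => layerKernel d ε (Z a - Z b)) 0 :=
      (continuousAt_layerKernel d hne).comp (f := fun ε => (ε, Z a - Z b)) (by fun_prop)
    exact (hcont.tendsto.mono_left nhdsWithin_le_nhds).mul_const (f b)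
  · simpa only [layerIntegrand_of_notMem hb] using tendsto_const_nhds

lemma tendsto_layerGradIntegrand (hZ : IsHolderChart γ Ω Z) (hfΩ : tsupport f ⊆ Ω) {b : E}
    (ha : a ∈ Ω) (hba : b ≠ a) :
    Tendsto (fun ε => layerGradIntegrand d Z f v ε a b) (𝓝[>] 0)
      (𝓝 (layerGradIntegrand d Z f v 0 a b)) := by
  by_cases hb : b ∈ tsupport f
  · have hne : regNorm 0 (Z a - Z b) ≠ 0 := by simpa using hZ.sub_ne_zero ha (hfΩ hb) hba
    have hcont : ContinuousAt
        (fun ε => layerGradKernel d ε (fderiv ℝ Z a v) (Z a - Z b)) 0 :=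
      (continuousAt_layerGradKernel d hne).comp
        (f := fun ε => (ε, fderiv ℝ Z a v, Z a - Z b)) (by fun_prop)
    exact (hcont.tendsto.mono_left nhdsWithin_le_nhds).mul_const (f b)
  · simpa only [layerGradIntegrand_of_notMem hb] using tendsto_const_nhds

lemma exists_abs_layerGradIntegrand_le (hZ : IsHolderChart γ Ω Z) (hd : 1 ≤ d) (hf : Continuous f)
    (hfc : HasCompactSupport f) (hfΩ : tsupport f ⊆ Ω) {r : ℝ} (hr : 0 < r) :
    ∃ C ≥ 0, ∀ a ∈ Ω, ∀ v ε, ∀ b ∉ ball a r, |layerGradIntegrand d Z f v ε a b|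
      ≤ (tsupport f).indicator (fun _ => C * ‖fderiv ℝ Z a v‖) b := by
  obtain ⟨c, hc, hlow⟩ := hZ.exists_le_norm_sub
  obtain ⟨B, hB⟩ := hf.bounded_above_of_compact_support hfc
  have hB₀ : 0 ≤ B := (norm_nonneg _).trans (hB 0)
  refine ⟨|2 - (d : ℝ)| * (c * r / (c * r) ^ d) * B, by positivity, fun a ha v ε b hb => ?_⟩
  by_cases hbf : b ∈ tsupport f
  · have hab : r ≤ ‖a - b‖ := by simpa [dist_comm, dist_eq_norm] using hb
    have hkernel := abs_layerGradKernel_le hd ε (fderiv ℝ Z a v) (mul_pos hc hr)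
      ((by gcongr : c * r ≤ c * ‖a - b‖).trans (hlow a ha b (hfΩ hbf)))
    rw [indicator_of_mem hbf, layerGradIntegrand, abs_mul]
    exact (mul_le_mul hkernel (hB b) (abs_nonneg _) (by positivity)).trans_eq (by ring)
  · rw [indicator_of_notMem hbf, layerGradIntegrand_of_notMem hbf, abs_zero]

lemma exists_abs_layerGradIntegrand_add_le (hZ : IsHolderChart γ Ω Z) (hγ : 0 < γ) (hd : 1 ≤ d)
    (hf : MemHolder γ f) (hfc : HasCompactSupport f) :
    ∃ C ≥ 0, ∀ a h v ε, h ≠ 0 → closedBall a ‖h‖ ⊆ Ω →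
      |layerGradIntegrand d Z f v ε a (a + h) + layerGradIntegrand d Z f v ε a (a - h)|
        ≤ C * ‖fderiv ℝ Z a v‖ * ‖h‖ ^ (-((d : ℝ) - 1 - γ)) := by
  obtain ⟨c, hc, hlow⟩ := hZ.exists_le_norm_sub
  obtain ⟨H, hH⟩ := hZ.exists_holderOnWith
  obtain ⟨Hf, hHf⟩ := hf
  obtain ⟨B, hB⟩ := (hHf.continuous hγ).bounded_above_of_compact_support hfc
  have hB₀ : 0 ≤ B := (norm_nonneg _).trans (hB 0)
  refine ⟨|2 - (d : ℝ)| * ((c * (Hf * 2 ^ (γ : ℝ)) + (1 + d) * (2 * H) * B) / c ^ d),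
    by positivity, fun a h v ε h0 hball => ?_⟩
  have hpos : 0 < ‖h‖ := norm_pos_iff.2 h0
  have ha : a ∈ Ω := hball (mem_closedBall_self hpos.le)
  have hadd : c * ‖h‖ ≤ ‖Z a - Z (a + h)‖ := by
    simpa using hlow a ha (a + h) (hball (by simp))
  have hsub : c * ‖h‖ ≤ ‖Z a - Z (a - h)‖ := by
    simpa using hlow a ha (a - h) (hball (by simp))
  have hsum := norm_sub_add_sub_le (fun x hx => hZ.differentiableAt x (hball hx)) (hH.mono hball)
  have hfdiff : |f (a + h) - f (a - h)| ≤ Hf * (2 ^ (γ : ℝ) * ‖h‖ ^ (γ : ℝ)) := by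
    rw [← Real.mul_rpow zero_le_two hpos.le]
    refine hHf.dist_le_of_le ?_
    rw [dist_eq_norm, add_sub_sub_cancel, two_mul]
    exact norm_add_le h h
  have hpow : ‖h‖ ^ (-((d : ℝ) - 1 - γ)) = ‖h‖ ^ (γ : ℝ) * ‖h‖ / ‖h‖ ^ d := by
    rw [← Real.rpow_add_one hpos.ne', ← Real.rpow_natCast, ← Real.rpow_sub hpos]
    ring_nf
  refine (abs_layerGradKernel_mul_add_le hd ε _ (by positivity) hadd hsub _ _).trans ?_
  calc _ ≤ |2 - (d : ℝ)| * ‖fderiv ℝ Z a v‖ *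
        ((c * ‖h‖ * (Hf * (2 ^ (γ : ℝ) * ‖h‖ ^ (γ : ℝ)))
          + (1 + d) * (2 * (H * ‖h‖ ^ (γ : ℝ) * ‖h‖)) * B) / (c * ‖h‖) ^ d) := by
        gcongr
        exact hB (a - h)
    _ = _ := by
        rw [hpow, mul_pow]
        field_simp

lemma exists_symmetrizedBound (hZ : IsHolderChart γ Ω Z) (hγ : 0 < γ) (hd : 1 ≤ d)
    (hf : MemHolder γ f) (hfc : HasCompactSupport f) (hfΩ : tsupport f ⊆ Ω) :
    ∃ r > 0, ∃ C₁ ≥ 0, ∃ C₂, ∀ a ∈ Ω, ∀ v ε,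
      SymmetrizedBound (tsupport f) (d - 1 - γ) (C₁ * ‖fderiv ℝ Z a v‖) (C₂ * ‖fderiv ℝ Z a v‖)
        r a (layerGradIntegrand d Z f v ε a) := by
  have hcont : Continuous f := have ⟨_, hHf⟩ := hf; hHf.continuous hγ
  obtain ⟨δ, hδ, hthick⟩ := hfc.isCompact.exists_cthickening_subset_open hZ.isOpen hfΩ
  obtain ⟨C₁, hC₁, hfar⟩ :=
    hZ.exists_abs_layerGradIntegrand_le hd hcont hfc hfΩ (half_pos hδ)
  obtain ⟨C₂, hC₂, hnear⟩ := hZ.exists_abs_layerGradIntegrand_add_le hγ hd hf hfc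
  refine ⟨δ / 2, half_pos hδ, C₁, hC₁, C₂, fun a ha v ε => ⟨hfar a ha v ε, fun h hh h0 => ?_⟩⟩
  rw [mem_ball_zero_iff] at hh
  have hball {b : E} (hb : b ∈ tsupport f) (hab : dist a b = ‖h‖) : closedBall a ‖h‖ ⊆ Ω :=
    fun x hx => hthick <| mem_cthickening_of_dist_le x b δ _ hb <| by
      linarith [dist_triangle x a b, mem_closedBall.1 hx]
  by_cases hadd : a + h ∈ tsupport f
  · exact hnear a h v ε h0 (hball hadd (by simp))
  by_cases hsub : a - h ∈ tsupport f
  · exact hnear a h v ε h0 (hball hsub (by simp))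
  rw [layerGradIntegrand_of_notMem hadd, layerGradIntegrand_of_notMem hsub, add_zero, abs_zero]
  positivity

variable [MeasurableSpace E] [BorelSpace E] {ν : Measure E}

lemma integrableOn_layerGradIntegrand [IsFiniteMeasureOnCompacts ν] (hZ : IsHolderChart γ Ω Z)
    (hγ : 0 < γ) (hf : Continuous f) (hfc : HasCompactSupport f) (hfΩ : tsupport f ⊆ Ω)
    (ha : a ∈ Ω) {s : Set E} (hs : IsClosed s)
    (hreg : ∀ b ∈ s ∩ tsupport f, regNorm ε (Z a - Z b) ≠ 0) :
    IntegrableOn (layerGradIntegrand d Z f v ε a) s ν := by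
  have hkernel : ContinuousOn (fun b => layerGradKernel d ε (fderiv ℝ Z a v) (Z a - Z b))
      (s ∩ tsupport f) :=
    (hZ.continuousOn_layerGradKernel hγ (s := {a} ×ˢ (s ∩ tsupport f))
      (prod_mono (singleton_subset_iff.2 ha) (inter_subset_right.trans hfΩ))
      (by rintro ⟨_, b⟩ ⟨rfl, hb⟩; exact hreg b hb)).comp (f := fun b => (a, b)) (by fun_prop)
      fun b hb => ⟨rfl, hb⟩
  refine IntegrableOn.of_forall_sdiff_eq_zero ((hkernel.mul hf.continuousOn).integrableOn_compact
    (hfc.isCompact.inter_left hs)) hs.measurableSet fun b hb => layerGradIntegrand_of_notMem ?_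
  exact fun hbf => hb.2 ⟨hb.1, hbf⟩

lemma integrable_layerGradIntegrand [IsFiniteMeasureOnCompacts ν] (hZ : IsHolderChart γ Ω Z)
    (hγ : 0 < γ) (hf : Continuous f) (hfc : HasCompactSupport f) (hfΩ : tsupport f ⊆ Ω)
    (ha : a ∈ Ω) (hε : ε ≠ 0) : Integrable (layerGradIntegrand d Z f v ε a) ν :=
  integrableOn_univ.1 <| hZ.integrableOn_layerGradIntegrand hγ hf hfc hfΩ ha isClosed_univ
    fun b _ => (regNorm_pos hε (Z a - Z b)).ne'

lemma aestronglyMeasurable_layerIntegrand [IsFiniteMeasureOnCompacts ν]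
    (hZ : IsHolderChart γ Ω Z) (hf : Continuous f) (hfc : HasCompactSupport f)
    (hfΩ : tsupport f ⊆ Ω) (ha : a ∈ Ω) (hε : ε ≠ 0) :
    AEStronglyMeasurable (layerIntegrand d Z f ε a) ν := by
  have hkernel : ContinuousOn (fun b => layerKernel d ε (Z a - Z b)) (tsupport f) :=
    (hZ.continuousOn_layerKernel (s := {a} ×ˢ tsupport f)
      (prod_mono (singleton_subset_iff.2 ha) hfΩ) fun p _ => (regNorm_pos hε _).ne').comp
      (f := fun b => (a, b)) (by fun_prop) fun b hb => ⟨rfl, hb⟩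
  exact (integrable_mul_of_continuousOn hfc.isCompact hkernel hf (subset_tsupport f)).1

variable [FiniteDimensional ℝ E] [ν.IsAddHaarMeasure]

lemma neg_integral_layerIntegrand_mul_fderiv_apply_of_ne_zero {g : E → ℝ}
    (hZ : IsHolderChart γ Ω Z) (hγ : 0 < γ)
    (hf : Continuous f) (hfc : HasCompactSupport f) (hfΩ : tsupport f ⊆ Ω)
    (hg : ContDiff ℝ 1 g) (hgc : HasCompactSupport g) (hgΩ : tsupport g ⊆ Ω) (hε : ε ≠ 0) :
    -∫ a, (∫ b, layerIntegrand d Z f ε a b ∂ν) * fderiv ℝ g a v ∂ν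
      = ∫ a, (∫ b, layerGradIntegrand d Z f v ε a b ∂ν) * g a ∂ν :=
  neg_integral_kernel_mul_fderiv_apply
    (hZ.continuousOn_layerKernel (prod_mono hgΩ hfΩ) fun _ _ => (regNorm_pos hε _).ne')
    (hZ.continuousOn_layerGradKernel hγ (prod_mono hgΩ hfΩ) fun _ _ => (regNorm_pos hε _).ne')
    (fun a ha b _ => hasLineDerivAt_layerKernel_sub d hε (hZ.differentiableAt a (hgΩ ha)) (Z b) v)
    hf hfc hg hgc

variable [Nontrivial E] {α C₁ C₂ r : ℝ}

lemma tendsto_integral_layerGradIntegrand (hZ : IsHolderChart γ Ω Z) (hγ : 0 < γ)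
    (hf : Continuous f) (hfc : HasCompactSupport f) (hfΩ : tsupport f ⊆ Ω) (ha : a ∈ Ω)
    (hα : α < finrank ℝ E) (hr : 0 < r)
    (hbound : ∀ ε, SymmetrizedBound (tsupport f) α C₁ C₂ r a (layerGradIntegrand d Z f v ε a)) :
    Tendsto (fun ε => ∫ b, layerGradIntegrand d Z f v ε a b ∂ν) (𝓝[>] 0)
      (𝓝 (symmetrizedIntegral ν (layerGradIntegrand d Z f v 0 a) a r)) :=
  SymmetrizedBound.tendsto_integral (Eventually.of_forall hbound) hr
    (isClosed_tsupport f).measurableSet hfc.isCompact.measure_lt_top.ne hα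
    (eventually_mem_nhdsWithin.mono fun _ hε =>
      hZ.integrable_layerGradIntegrand hγ hf hfc hfΩ ha (ne_of_gt hε))
    fun _ hba => hZ.tendsto_layerGradIntegrand hfΩ ha hba

lemma tendsto_setIntegral_compl_ball_layerGradIntegrand (hZ : IsHolderChart γ Ω Z) (hγ : 0 < γ)
    (hf : Continuous f) (hfc : HasCompactSupport f) (hfΩ : tsupport f ⊆ Ω) (ha : a ∈ Ω)
    (hα : α < finrank ℝ E) (hr : 0 < r)
    (hbound : SymmetrizedBound (tsupport f) α C₁ C₂ r a (layerGradIntegrand d Z f v 0 a)) :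
    Tendsto (fun ε => ∫ b in (ball a ε)ᶜ, layerGradIntegrand d Z f v 0 a b ∂ν) (𝓝[>] 0)
      (𝓝 (symmetrizedIntegral ν (layerGradIntegrand d Z f v 0 a) a r)) := by
  simp only [← integral_indicator measurableSet_ball.compl]
  refine SymmetrizedBound.tendsto_integral (Eventually.of_forall hbound.indicator_compl_ball) hr
    (isClosed_tsupport f).measurableSet hfc.isCompact.measure_lt_top.ne hα ?_ fun b hba => ?_
  · filter_upwards [self_mem_nhdsWithin] with ε hε
    refine (integrable_indicator_iff measurableSet_ball.compl).2 <|
      hZ.integrableOn_layerGradIntegrand hγ hf hfc hfΩ ha isOpen_ball.isClosed_compl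
        fun b hb => ?_
    have hba : b ≠ a := fun hba => hb.1 (hba ▸ mem_ball_self hε)
    simpa using hZ.sub_ne_zero ha (hfΩ hb.2) hba
  · refine tendsto_const_nhds.congr' ?_
    filter_upwards [Ioo_mem_nhdsGT (dist_pos.2 hba)] with ε hε
    rw [indicator_of_mem]
    simpa using hε.2.le

lemma exists_integrable_abs_layerIntegrand_le (hZ : IsHolderChart γ Ω Z)
    (hf : Continuous f) (hfc : HasCompactSupport f) (hfΩ : tsupport f ⊆ Ω) (hd2 : 2 ≤ d)
    (hd : d ≤ finrank ℝ E + 1) {K : Set E} (hK : IsCompact K) (hKΩ : K ⊆ Ω) :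
    ∃ φ : E → ℝ, Integrable φ ν ∧
      ∀ a ∈ K, ∀ ε, ∀ b ≠ a, |layerIntegrand d Z f ε a b| ≤ φ (a - b) := by
  obtain ⟨c, hc, hlow⟩ := hZ.exists_le_norm_sub
  obtain ⟨B, hB⟩ := hf.bounded_above_of_compact_support hfc
  have hB₀ : 0 ≤ B := (norm_nonneg _).trans (hB 0)
  have hbdd := (hK.union hfc.isCompact).isBounded
  have hdE : (d : ℝ) - 2 < finrank ℝ E := by
    have : (d : ℝ) ≤ finrank ℝ E + 1 := by exact_mod_cast hd
    linarith
  refine ⟨(ball 0 (diam (K ∪ tsupport f) + 1)).indicator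
    fun h => c ^ (2 - (d : ℝ)) * B * ‖h‖ ^ (-((d : ℝ) - 2)),
    (integrable_indicator_iff measurableSet_ball).2
      ((integrableOn_ball_norm_rpow_neg hdE _).const_mul _), fun a ha ε b hba => ?_⟩
  by_cases hb : b ∈ tsupport f
  · have hab : 0 < ‖a - b‖ := norm_sub_pos_iff.2 hba.symm
    have hmem : a - b ∈ ball 0 (diam (K ∪ tsupport f) + 1) := by
      rw [mem_ball_zero_iff, ← dist_eq_norm]
      exact (dist_le_diam_of_mem hbdd (Or.inl ha) (Or.inr hb)).trans_lt (lt_add_one _)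
    have hkernel := abs_layerKernel_le hd2 ε (mul_pos hc hab) (hlow a (hKΩ ha) b (hfΩ hb))
    rw [Real.mul_rpow hc.le hab.le] at hkernel
    rw [indicator_of_mem hmem, layerIntegrand, abs_mul, neg_sub]
    exact (mul_le_mul hkernel (hB b) (abs_nonneg _) (by positivity)).trans_eq (by ring)
  · rw [layerIntegrand_of_notMem hb, abs_zero]
    exact indicator_nonneg (fun _ _ => by positivity) _

lemma tendsto_integral_layerIntegrand (hZ : IsHolderChart γ Ω Z)
    (hf : Continuous f) (hfc : HasCompactSupport f) (hfΩ : tsupport f ⊆ Ω) (hd2 : 2 ≤ d)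
    (hd : d ≤ finrank ℝ E + 1) (ha : a ∈ Ω) :
    Tendsto (fun ε => ∫ b, layerIntegrand d Z f ε a b ∂ν) (𝓝[>] 0)
      (𝓝 (∫ b, layerIntegrand d Z f 0 a b ∂ν)) := by
  obtain ⟨φ, hφ, hle⟩ := hZ.exists_integrable_abs_layerIntegrand_le (ν := ν) hf hfc hfΩ hd2 hd
    isCompact_singleton (singleton_subset_iff.2 ha)
  refine tendsto_integral_filter_of_dominated_convergence (fun b => φ (a - b))
    (eventually_mem_nhdsWithin.mono fun ε hε =>
      hZ.aestronglyMeasurable_layerIntegrand hf hfc hfΩ ha (ne_of_gt hε))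
    (Eventually.of_forall fun ε => (Measure.ae_ne ν a).mono (hle a rfl ε)) (hφ.comp_sub_left a)
    ((Measure.ae_ne ν a).mono fun b hba => hZ.tendsto_layerIntegrand hfΩ ha hba)

lemma exists_abs_integral_layerIntegrand_le (hZ : IsHolderChart γ Ω Z)
    (hf : Continuous f) (hfc : HasCompactSupport f) (hfΩ : tsupport f ⊆ Ω) (hd2 : 2 ≤ d)
    (hd : d ≤ finrank ℝ E + 1) {K : Set E} (hK : IsCompact K) (hKΩ : K ⊆ Ω) :
    ∃ C, ∀ a ∈ K, ∀ ε, |∫ b, layerIntegrand d Z f ε a b ∂ν| ≤ C := by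
  obtain ⟨φ, hφ, hle⟩ :=
    hZ.exists_integrable_abs_layerIntegrand_le (ν := ν) hf hfc hfΩ hd2 hd hK hKΩ
  refine ⟨∫ h, φ h ∂ν, fun a ha ε => ?_⟩
  rw [← integral_sub_left_eq_self φ ν a, ← Real.norm_eq_abs]
  exact norm_integral_le_of_norm_le (hφ.comp_sub_left a)
    ((Measure.ae_ne ν a).mono (hle a ha ε))

lemma tendsto_integral_layerIntegrand_mul {g : E → ℝ} (hZ : IsHolderChart γ Ω Z)
    (hf : Continuous f) (hfc : HasCompactSupport f) (hfΩ : tsupport f ⊆ Ω) (hd2 : 2 ≤ d)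
    (hd : d ≤ finrank ℝ E + 1)
    (hg : Continuous g) (hgc : HasCompactSupport g) (hgΩ : tsupport g ⊆ Ω) :
    Tendsto (fun ε => ∫ a, (∫ b, layerIntegrand d Z f ε a b ∂ν) * g a ∂ν) (𝓝[>] 0)
      (𝓝 (∫ a, (∫ b, layerIntegrand d Z f 0 a b ∂ν) * g a ∂ν)) := by
  obtain ⟨C, hC⟩ := hZ.exists_abs_integral_layerIntegrand_le (ν := ν) hf hfc hfΩ hd2 hd
    hgc.isCompact hgΩ
  refine tendsto_integral_mul_of_dominated hgc.isCompact hg (subset_tsupport g)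
    (continuousOn_const (c := C))
    (eventually_mem_nhdsWithin.mono fun ε hε => ?_) (Eventually.of_forall fun ε a ha => hC a ha ε)
    fun a ha => hZ.tendsto_integral_layerIntegrand hf hfc hfΩ hd2 hd (hgΩ ha)
  exact aestronglyMeasurable_integral_kernel_mul (hZ.continuousOn_layerKernel (prod_mono hgΩ hfΩ)
    fun _ _ => (regNorm_pos (ne_of_gt hε) _).ne') hf hfc hg hgc

lemma tendsto_integral_layerGradIntegrand_mul {g : E → ℝ}
    (hZ : IsHolderChart γ Ω Z) (hγ : 0 < γ)
    (hf : Continuous f) (hfc : HasCompactSupport f) (hfΩ : tsupport f ⊆ Ω)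
    (hg : Continuous g) (hgc : HasCompactSupport g) (hgΩ : tsupport g ⊆ Ω)
    (hα : α < finrank ℝ E) (hr : 0 < r) (hC₁ : 0 ≤ C₁)
    (hbound : ∀ a ∈ Ω, ∀ ε, SymmetrizedBound (tsupport f) α (C₁ * ‖fderiv ℝ Z a v‖)
      (C₂ * ‖fderiv ℝ Z a v‖) r a (layerGradIntegrand d Z f v ε a)) :
    Tendsto (fun ε => ∫ a, (∫ b, layerGradIntegrand d Z f v ε a b ∂ν) * g a ∂ν) (𝓝[>] 0)
      (𝓝 (∫ a, symmetrizedIntegral ν (layerGradIntegrand d Z f v 0 a) a r * g a ∂ν)) := by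
  have hnorm : ContinuousOn (fun a => ‖fderiv ℝ Z a v‖) (tsupport g) :=
    ((hZ.continuousOn_fderiv_apply hγ v).mono hgΩ).norm
  refine tendsto_integral_mul_of_dominated hgc.isCompact hg (subset_tsupport g)
    (L := fun a => C₁ * ‖fderiv ℝ Z a v‖ * ν.real (tsupport f)
      + 2⁻¹ * (C₂ * ‖fderiv ℝ Z a v‖ * ∫ h in ball (0 : E) r, ‖h‖ ^ (-α) ∂ν)) (by fun_prop)
    (eventually_mem_nhdsWithin.mono fun ε hε => ?_)
    (eventually_mem_nhdsWithin.mono fun ε hε a ha => ?_)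
    fun a ha => hZ.tendsto_integral_layerGradIntegrand hγ hf hfc hfΩ (hgΩ ha) hα hr
      (hbound a (hgΩ ha))
  · exact aestronglyMeasurable_integral_kernel_mul (hZ.continuousOn_layerGradKernel hγ
      (prod_mono hgΩ hfΩ) fun _ _ => (regNorm_pos (ne_of_gt hε) _).ne') hf hfc hg hgc
  · exact (hbound a (hgΩ ha) ε).abs_integral_le (isClosed_tsupport f).measurableSet
      hfc.isCompact.measure_lt_top.ne hα (by positivity)
      (hZ.integrable_layerGradIntegrand hγ hf hfc hfΩ (hgΩ ha) (ne_of_gt hε))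

lemma neg_integral_layerIntegrand_mul_fderiv_apply {g : E → ℝ}
    (hZ : IsHolderChart γ Ω Z) (hγ : 0 < γ)
    (hf : Continuous f) (hfc : HasCompactSupport f) (hfΩ : tsupport f ⊆ Ω)
    (hd2 : 2 ≤ d) (hd : d ≤ finrank ℝ E + 1)
    (hg : ContDiff ℝ 1 g) (hgc : HasCompactSupport g) (hgΩ : tsupport g ⊆ Ω)
    (hα : α < finrank ℝ E) (hr : 0 < r) (hC₁ : 0 ≤ C₁)
    (hbound : ∀ a ∈ Ω, ∀ ε, SymmetrizedBound (tsupport f) α (C₁ * ‖fderiv ℝ Z a v‖)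
      (C₂ * ‖fderiv ℝ Z a v‖) r a (layerGradIntegrand d Z f v ε a)) :
    -∫ a, (∫ b, layerIntegrand d Z f 0 a b ∂ν) * fderiv ℝ g a v ∂ν
      = ∫ a, symmetrizedIntegral ν (layerGradIntegrand d Z f v 0 a) a r * g a ∂ν := by
  have hleft := hZ.tendsto_integral_layerIntegrand_mul (ν := ν) hf hfc hfΩ hd2 hd
    ((hg.continuous_fderiv one_ne_zero).clm_apply (continuous_const (y := v)))
    (hgc.fderiv_apply ℝ v) ((tsupport_fderiv_apply_subset ℝ v).trans hgΩ)
  have hright := hZ.tendsto_integral_layerGradIntegrand_mul (ν := ν) hγ hf hfc hfΩ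
    hg.continuous hgc hgΩ hα hr hC₁ hbound
  refine tendsto_nhds_unique (hleft.neg.congr' ?_) hright
  filter_upwards [self_mem_nhdsWithin] with ε hε
  exact hZ.neg_integral_layerIntegrand_mul_fderiv_apply_of_ne_zero hγ hf hfc hfΩ hg hgc hgΩ
    (ne_of_gt hε)

end IsHolderChart

end Chart

lemma holderOnWith_toNNReal {E F : Type*} [SeminormedAddCommGroup E] [SeminormedAddCommGroup F]
    {s : Set E} {f : E → F} {C : ℝ} {γ : ℝ≥0}
    (hf : ∀ x ∈ s, ∀ y ∈ s, ‖f x - f y‖ ≤ C * ‖x - y‖ ^ (γ : ℝ)) :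
    HolderOnWith C.toNNReal γ f s := fun x hx y hy => by
  have hle : nndist (f x) (f y) ≤ C.toNNReal * nndist x y ^ (γ : ℝ) := by
    rw [← NNReal.coe_le_coe]
    push_cast
    rw [dist_eq_norm, dist_eq_norm, Real.coe_toNNReal']
    exact (hf x hx y hy).trans (by gcongr; exact le_max_left C 0)
  rw [edist_nndist, edist_nndist, ← ENNReal.coe_rpow_of_nonneg _ γ.coe_nonneg]
  exact_mod_cast hle

theorem pv_formula_chart_general {E F : Type*} [NormedAddCommGroup E] [NormedSpace ℝ E]
    [FiniteDimensional ℝ E] [MeasurableSpace E] [BorelSpace E] (ν : Measure E) [ν.IsAddHaarMeasure]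
    [NormedAddCommGroup F] [InnerProductSpace ℝ F] {d : ℕ} (hd2 : 2 ≤ d) (hd : d ≤ finrank ℝ E + 1)
    {γ : ℝ≥0} (hγ : 0 < γ) {Ω : Set E} {Z : E → F} (hZ : IsHolderChart γ Ω Z) {f : E → ℝ}
    (hf : MemHolder γ f) (hfc : HasCompactSupport f) (hfΩ : tsupport f ⊆ Ω) (v : E) :
    ∃ P : E → ℝ,
      (∀ a ∈ Ω, Tendsto
        (fun ε => ∫ b in Ω \ ball a ε,
          ((2 - (d : ℝ)) * ⟪Z a - Z b, fderiv ℝ Z a v⟫ / ‖Z a - Z b‖ ^ d) * f b ∂ν)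
        (𝓝[>] 0) (𝓝 (P a))) ∧
      ∀ g : E → ℝ, ContDiff ℝ 1 g → HasCompactSupport g → tsupport g ⊆ Ω →
        -(∫ a, (∫ b in Ω, ‖Z a - Z b‖ ^ (2 - (d : ℝ)) * f b ∂ν) * fderiv ℝ g a v ∂ν)
          = ∫ a, P a * g a ∂ν := by
  have hpos : 0 < finrank ℝ E := by omega
  have : Nontrivial E := nontrivial_of_finrank_pos hpos
  have hcont : Continuous f := have ⟨_, hHf⟩ := hf; hHf.continuous hγ
  have hα : (d : ℝ) - 1 - γ < finrank ℝ E := by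
    have : (d : ℝ) ≤ finrank ℝ E + 1 := by exact_mod_cast hd
    have : (0 : ℝ) < γ := hγ
    linarith
  obtain ⟨r, hr, C₁, hC₁, C₂, hbound⟩ :=
    hZ.exists_symmetrizedBound hγ (one_le_two.trans hd2) hf hfc hfΩ
  refine ⟨fun a => symmetrizedIntegral ν (layerGradIntegrand d Z f v 0 a) a r, fun a ha => ?_,
    fun g hg hgc hgΩ => ?_⟩
  · refine (hZ.tendsto_setIntegral_compl_ball_layerGradIntegrand hγ hcont hfc hfΩ ha hα hr
      (hbound a ha v 0)).congr fun ε => ?_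
    rw [setIntegral_eq_of_subset_of_forall_sdiff_eq_zero measurableSet_ball.compl
      (sdiff_subset_compl Ω (ball a ε)) fun b hb => layerGradIntegrand_of_notMem fun hbf =>
        hb.2 ⟨hfΩ hbf, hb.1⟩]
    simp only [layerGradIntegrand, layerGradKernel, regNorm_zero_left]
  · have hset (a : E) : ∫ b in Ω, layerIntegrand d Z f 0 a b ∂ν
        = ∫ b, layerIntegrand d Z f 0 a b ∂ν :=
      setIntegral_eq_integral_of_forall_compl_eq_zero fun b hb =>
        layerIntegrand_of_notMem (mt (@hfΩ b) hb)
    rw [← hZ.neg_integral_layerIntegrand_mul_fderiv_apply hγ hcont hfc hfΩ hd2 hd hg hgc hgΩ hα hr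
      hC₁ fun a ha => hbound a ha v]
    simp only [← hset]
    simp only [layerIntegrand, layerKernel, regNorm_zero_left]

/-- Principal-value formula for the derivative of the single-layer-type operator
in a chart. -/
theorem pv_formula_chart
    (d : ℕ) (hd : 3 ≤ d) (γ : ℝ) (hγ : γ ∈ Set.Ioo (0:ℝ) 1)
    (μ : ℝ) (hμ : 1 ≤ μ) (r₀ : ℝ) (hr₀ : 0 < r₀)
    (a₀ : EuclideanSpace ℝ (Fin (d - 1)))
    (Z : EuclideanSpace ℝ (Fin (d - 1)) → EuclideanSpace ℝ (Fin d))
    (hZdiff : ∀ a ∈ Metric.ball a₀ (6 * r₀), DifferentiableAt ℝ Z a)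
    (hZlow : ∀ a ∈ Metric.ball a₀ (6 * r₀), ∀ b ∈ Metric.ball a₀ (6 * r₀),
      μ⁻¹ * ‖a - b‖ ≤ ‖Z a - Z b‖)
    (H : ℝ)
    (hZhold : ∀ a ∈ Metric.ball a₀ (6 * r₀), ∀ b ∈ Metric.ball a₀ (6 * r₀),
      ‖fderiv ℝ Z a - fderiv ℝ Z b‖ ≤ H * ‖a - b‖ ^ γ)
    (f : EuclideanSpace ℝ (Fin (d - 1)) → ℝ) (Hf : ℝ)
    (hf : ∀ a b, |f a - f b| ≤ Hf * ‖a - b‖ ^ γ)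
    (hfsupp : tsupport f ⊆ Metric.ball a₀ (3 * r₀))
    (j : Fin (d - 1)) :
    ∃ P : EuclideanSpace ℝ (Fin (d - 1)) → ℝ,
      (∀ a ∈ Metric.ball a₀ (6 * r₀),
        Filter.Tendsto
          (fun ε : ℝ =>
            ∫ b in Metric.ball a₀ (6 * r₀) \ Metric.ball a ε,
              ((2 - (d:ℝ)) * ⟪Z a - Z b, fderiv ℝ Z a (EuclideanSpace.single j 1)⟫
                  / ‖Z a - Z b‖ ^ d) * f b)
          (nhdsWithin 0 (Set.Ioi 0)) (nhds (P a))) ∧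
      (∀ g : EuclideanSpace ℝ (Fin (d - 1)) → ℝ,
        ContDiff ℝ (⊤ : ℕ∞) g → tsupport g ⊆ Metric.ball a₀ (6 * r₀) →
        -(∫ a, (∫ b in Metric.ball a₀ (6 * r₀), ‖Z a - Z b‖ ^ (2 - (d:ℝ)) * f b)
              * fderiv ℝ g a (EuclideanSpace.single j 1))
          = ∫ a, P a * g a) := by
  lift γ to ℝ≥0 using hγ.1.le
  have hZ : IsHolderChart γ (ball a₀ (6 * r₀)) Z :=
    ⟨isOpen_ball, hZdiff, ⟨μ⁻¹, by positivity, hZlow⟩, _, holderOnWith_toNNReal hZhold⟩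
  have hfγ : MemHolder γ f :=
    ⟨_, holderOnWith_univ.1 (holderOnWith_toNNReal fun a _ b _ => hf a b)⟩
  have hcompact {u : EuclideanSpace ℝ (Fin (d - 1)) → ℝ} {r : ℝ} (hu : tsupport u ⊆ ball a₀ r) :
      HasCompactSupport u :=
    isCompact_of_isClosed_isBounded (isClosed_tsupport u) (isBounded_ball.subset hu)
  obtain ⟨P, hP, hweak⟩ := pv_formula_chart_general volume (d := d) (by omega) (by simp; omega)
    hγ.1 hZ hfγ (hcompact hfsupp) (hfsupp.trans (ball_subset_ball (by linarith)))
    (EuclideanSpace.single j 1)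
  exact ⟨P, hP, fun g hg hgΩ => hweak g (hg.of_le (by simp)) (hcompact hgΩ) hgΩ⟩
end

section
/- Pseudo-oddness cancellation estimate: let d ≥ 2, γ ∈ (0,1), μ ≥ 1, L > 0, H > 0, r₀ > 0, a₀ ∈ ℝ^{d-1}, and let Z : B(a₀, 6r₀) ⊂ ℝ^{d-1} → ℝ^d be continuously differentiable with (1/μ)|a-b| ≤ |Z(a)-Z(b)| ≤ L|a-b| for all a,b, and with ‖DZ‖_γ ≤ H (γ-Hölder seminorm of the derivative). Then there is a constant C, depending only on d, γ, μ, L, H and r₀, such that for every a ∈ B(a₀, 3r₀) and every ε ∈ (0, 3r₀), | ∫_{{ξ ∈ ℝ^{d-1} : ε < |ξ| < 3r₀}} (Z(a+ξ) - Z(a)) / |Z(a+ξ) - Z(a)|^d dξ | ≤ C. -/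
open MeasureTheory Metric Set

/-!
The map `ξ ↦ Z (a + ξ) - Z a` is odd up to an error `O(‖ξ‖ ^ (1 + γ))`, because both `Z (a + ξ)` and
`Z (a - ξ)` are within that error of the tangent plane at `a`. The kernel `v / ‖v‖ ^ d` is odd, and
it is Lipschitz with constant `O(‖ξ‖ ^ (-d))` where `‖v‖ ≥ c * ‖ξ‖`. Averaging the integrand over
`ξ ↦ -ξ` therefore improves the critical singularity `‖ξ‖ ^ (1 - d)` to `‖ξ‖ ^ (1 - d + γ)`, which
is integrable at the origin of a space of dimension `d - 1`.
-/

section Symmetrization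

open scoped Pointwise

variable {G F : Type*} [AddGroup G] [MeasurableSpace G] [MeasurableNeg G] [NormedAddCommGroup F]
  [NormedSpace ℝ F] {ν : Measure G} [ν.IsNegInvariant] {A : Set G} {f : G → F}

lemma setIntegral_comp_neg (hA : -A = A) : ∫ x in A, f (-x) ∂ν = ∫ x in A, f x ∂ν := by
  have h := (Measure.measurePreserving_neg ν).setIntegral_preimage_emb
    (MeasurableEquiv.neg G).measurableEmbedding f A
  rwa [neg_preimage, hA] at h

lemma norm_setIntegral_le_half_of_norm_add_neg_le (hA : -A = A) (hAm : MeasurableSet A) {g : G → ℝ}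
    (hf : IntegrableOn f A ν) (hg : IntegrableOn g A ν) (hfg : ∀ x ∈ A, ‖f x + f (-x)‖ ≤ g x) :
    ‖∫ x in A, f x ∂ν‖ ≤ 2⁻¹ * ∫ x in A, g x ∂ν := by
  have hneg : IntegrableOn (fun x ↦ f (-x)) A ν := by simpa only [hA] using hf.comp_neg
  have hsum : ∫ x in A, (f x + f (-x)) ∂ν = (2 : ℝ) • ∫ x in A, f x ∂ν := by
    rw [integral_add hf hneg, setIntegral_comp_neg hA, two_smul]
  have hle := norm_integral_le_of_norm_le hg (ae_restrict_of_forall_mem hAm hfg)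
  rw [hsum, norm_smul, Real.norm_two] at hle
  linarith

end Symmetrization

section Annulus

open scoped Pointwise

/-- The open spherical shell `ε < ‖ξ‖ < R` about the origin, over which singular integrals are
truncated. -/
def openAnnulus (E : Type*) [Norm E] (ε R : ℝ) : Set E :=
  {ξ | ε < ‖ξ‖ ∧ ‖ξ‖ < R}

variable {E : Type*} [NormedAddCommGroup E] {ε R : ℝ}

lemma neg_openAnnulus : -openAnnulus E ε R = openAnnulus E ε R := by
  ext ξ
  simp only [openAnnulus, mem_neg, mem_ofPred_eq, norm_neg]

lemma openAnnulus_subset_ball : openAnnulus E ε R ⊆ ball 0 R :=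
  fun _ hξ ↦ mem_ball_zero_iff.2 hξ.2

lemma measurableSet_openAnnulus [MeasurableSpace E] [OpensMeasurableSpace E] :
    MeasurableSet (openAnnulus E ε R) :=
  measurable_norm measurableSet_Ioo

end Annulus

section RieszKernel

variable {F : Type*} [NormedAddCommGroup F] [NormedSpace ℝ F]

/-- The `s`-dimensional vector-valued Riesz kernel `v / ‖v‖ ^ (s + 1)`, homogeneous of degree `-s`;
its value at the origin is `0`. -/
noncomputable def rieszKernel (s : ℕ) (v : F) : F :=
  (‖v‖ ^ (s + 1))⁻¹ • v

lemma rieszKernel_neg (s : ℕ) (v : F) : rieszKernel s (-v) = -rieszKernel s v := by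
  rw [rieszKernel, rieszKernel, norm_neg, smul_neg]

lemma norm_rieszKernel (s : ℕ) {v : F} (hv : v ≠ 0) : ‖rieszKernel s v‖ = (‖v‖ ^ s)⁻¹ := by
  have := norm_ne_zero_iff.2 hv
  rw [rieszKernel, norm_smul, norm_inv, norm_pow, norm_norm, pow_succ]
  field_simp

lemma continuousOn_rieszKernel (s : ℕ) : ContinuousOn (rieszKernel s : F → F) {0}ᶜ :=
  ((continuous_norm.pow _).continuousOn.inv₀ fun _ hv ↦
    pow_ne_zero _ (norm_ne_zero_iff.2 hv)).smul continuousOn_id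

lemma inv_pow_sub_inv_pow_mul_le (s : ℕ) {p q : ℝ} (hp : 0 < p) (hpq : p ≤ q) :
    ((p ^ (s + 1))⁻¹ - (q ^ (s + 1))⁻¹) * p ≤ (s + 1) * (p ^ (s + 1))⁻¹ * (q - p) := by
  have hq : 0 < q := hp.trans_le hpq
  have bernoulli : 1 + (s + 1) * (p / q - 1) ≤ (p / q) ^ (s + 1) := by
    exact_mod_cast one_add_mul_sub_le_pow (R := ℝ) (by linarith [div_pos hp hq]) (s + 1)
  calc ((p ^ (s + 1))⁻¹ - (q ^ (s + 1))⁻¹) * p = (p ^ s)⁻¹ * (1 - (p / q) ^ (s + 1)) := by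
        rw [div_pow, pow_succ p]; field_simp
    _ ≤ (p ^ s)⁻¹ * ((s + 1) * (1 - p / q)) := by gcongr; linarith
    _ = (s + 1) * ((p ^ s)⁻¹ * q⁻¹) * (q - p) := by field_simp
    _ ≤ (s + 1) * ((p ^ s)⁻¹ * p⁻¹) * (q - p) := by gcongr
    _ = (s + 1) * (p ^ (s + 1))⁻¹ * (q - p) := by rw [pow_succ, mul_inv]

lemma norm_rieszKernel_sub_le (s : ℕ) {m : ℝ} (hm : 0 < m) {u v : F} (hu : m ≤ ‖u‖)
    (hv : m ≤ ‖v‖) :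
    ‖rieszKernel s u - rieszKernel s v‖ ≤ (s + 2) * (m ^ (s + 1))⁻¹ * ‖u - v‖ := by
  wlog huv : ‖u‖ ≤ ‖v‖ generalizing u v
  · rw [norm_sub_rev, norm_sub_rev u]
    exact this hv hu (le_of_not_ge huv)
  have hu0 : 0 < ‖u‖ := hm.trans_le hu
  have split : rieszKernel s u - rieszKernel s v =
      (‖v‖ ^ (s + 1))⁻¹ • (u - v) + ((‖u‖ ^ (s + 1))⁻¹ - (‖v‖ ^ (s + 1))⁻¹) • u := by
    rw [rieszKernel, rieszKernel]
    module
  have direction : ‖(‖v‖ ^ (s + 1))⁻¹ • (u - v)‖ ≤ (m ^ (s + 1))⁻¹ * ‖u - v‖ := by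
    rw [norm_smul, norm_inv, norm_pow, norm_norm]
    gcongr
  have magnitude : ‖((‖u‖ ^ (s + 1))⁻¹ - (‖v‖ ^ (s + 1))⁻¹) • u‖ ≤
      (s + 1) * (m ^ (s + 1))⁻¹ * ‖u - v‖ := by
    have hsub : 0 ≤ (‖u‖ ^ (s + 1))⁻¹ - (‖v‖ ^ (s + 1))⁻¹ := sub_nonneg.2 (by gcongr)
    rw [norm_smul, Real.norm_of_nonneg hsub]
    calc _ ≤ (s + 1) * (‖u‖ ^ (s + 1))⁻¹ * (‖v‖ - ‖u‖) := inv_pow_sub_inv_pow_mul_le s hu0 huv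
      _ ≤ (s + 1) * (m ^ (s + 1))⁻¹ * ‖u - v‖ := by
        gcongr
        rw [norm_sub_rev]
        exact norm_sub_norm_le v u
  calc _ ≤ (m ^ (s + 1))⁻¹ * ‖u - v‖ + (s + 1) * (m ^ (s + 1))⁻¹ * ‖u - v‖ :=
        split ▸ norm_add_le_of_le direction magnitude
    _ = (s + 2) * (m ^ (s + 1))⁻¹ * ‖u - v‖ := by ring

end RieszKernel

section PseudoOddness

variable {E F : Type*} [NormedAddCommGroup E] [NormedSpace ℝ E] [NormedAddCommGroup F]
  [NormedSpace ℝ F] {Z : E → F} {Z' : E → E →L[ℝ] F} {a ξ : E} {c γ H ε R : ℝ}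

lemma norm_image_add_sub_sub_fderiv_le_of_holder (hγ : 0 ≤ γ) (hH : 0 ≤ H)
    (hZ : ∀ x ∈ ball a R, HasFDerivAt Z (Z' x) x)
    (hZ' : ∀ x ∈ ball a R, ‖Z' x - Z' a‖ ≤ H * ‖x - a‖ ^ γ) (hξ : ‖ξ‖ < R) :
    ‖Z (a + ξ) - Z a - Z' a ξ‖ ≤ H * ‖ξ‖ ^ (1 + γ) := by
  have hsub : closedBall a ‖ξ‖ ⊆ ball a R := closedBall_subset_ball hξ
  have hderiv : ∀ x ∈ closedBall a ‖ξ‖, ‖Z' x - Z' a‖ ≤ H * ‖ξ‖ ^ γ := fun x hx ↦ by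
    refine (hZ' x (hsub hx)).trans ?_
    gcongr
    exact mem_closedBall_iff_norm.1 hx
  have hmean := (convex_closedBall a ‖ξ‖).norm_image_sub_le_of_norm_hasFDerivWithin_le'
    (fun x hx ↦ (hZ x (hsub hx)).hasFDerivWithinAt) hderiv
    (mem_closedBall_self (norm_nonneg ξ)) (y := a + ξ) (by simp [dist_eq_norm])
  rw [add_sub_cancel_left] at hmean
  rwa [Real.rpow_one_add' (norm_nonneg ξ) (by positivity), mul_comm ‖ξ‖, ← mul_assoc]

lemma norm_second_difference_le_of_holder (hγ : 0 ≤ γ) (hH : 0 ≤ H)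
    (hZ : ∀ x ∈ ball a R, HasFDerivAt Z (Z' x) x)
    (hZ' : ∀ x ∈ ball a R, ‖Z' x - Z' a‖ ≤ H * ‖x - a‖ ^ γ) (hξ : ‖ξ‖ < R) :
    ‖(Z (a + ξ) - Z a) + (Z (a - ξ) - Z a)‖ ≤ 2 * H * ‖ξ‖ ^ (1 + γ) := by
  have hpos := norm_image_add_sub_sub_fderiv_le_of_holder hγ hH hZ hZ' hξ
  have hneg := norm_image_add_sub_sub_fderiv_le_of_holder hγ hH hZ hZ' ((norm_neg ξ).trans_lt hξ)
  rw [norm_neg, ← sub_eq_add_neg] at hneg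
  calc ‖(Z (a + ξ) - Z a) + (Z (a - ξ) - Z a)‖
      = ‖(Z (a + ξ) - Z a - Z' a ξ) + (Z (a - ξ) - Z a - Z' a (-ξ))‖ := by
        rw [map_neg]; congr 1; abel
    _ ≤ H * ‖ξ‖ ^ (1 + γ) + H * ‖ξ‖ ^ (1 + γ) := norm_add_le_of_le hpos hneg
    _ = 2 * H * ‖ξ‖ ^ (1 + γ) := by ring

lemma norm_rieszKernel_add_rieszKernel_neg_le (s : ℕ) (hc : 0 < c) (hγ : 0 ≤ γ) (hH : 0 ≤ H)
    (hZc : ∀ x ∈ ball a R, c * ‖x - a‖ ≤ ‖Z x - Z a‖)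
    (hZ : ∀ x ∈ ball a R, HasFDerivAt Z (Z' x) x)
    (hZ' : ∀ x ∈ ball a R, ‖Z' x - Z' a‖ ≤ H * ‖x - a‖ ^ γ) (hξ0 : 0 < ‖ξ‖) (hξ : ‖ξ‖ < R) :
    ‖rieszKernel s (Z (a + ξ) - Z a) + rieszKernel s (Z (a - ξ) - Z a)‖ ≤
      2 * ((s + 2) * (c ^ (s + 1))⁻¹ * H) * ‖ξ‖ ^ (γ - s) := by
  have hpos : c * ‖ξ‖ ≤ ‖Z (a + ξ) - Z a‖ := by
    simpa using hZc (a + ξ) (by simpa using hξ)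
  have hneg : c * ‖ξ‖ ≤ ‖-(Z (a - ξ) - Z a)‖ := by
    simpa [norm_sub_rev] using hZc (a - ξ) (by simpa [dist_eq_norm] using hξ)
  calc ‖rieszKernel s (Z (a + ξ) - Z a) + rieszKernel s (Z (a - ξ) - Z a)‖
      = ‖rieszKernel s (Z (a + ξ) - Z a) - rieszKernel s (-(Z (a - ξ) - Z a))‖ := by
        rw [rieszKernel_neg, sub_neg_eq_add]
    _ ≤ (s + 2) * ((c * ‖ξ‖) ^ (s + 1))⁻¹ * ‖(Z (a + ξ) - Z a) - -(Z (a - ξ) - Z a)‖ :=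
        norm_rieszKernel_sub_le s (by positivity) hpos hneg
    _ ≤ (s + 2) * ((c * ‖ξ‖) ^ (s + 1))⁻¹ * (2 * H * ‖ξ‖ ^ (1 + γ)) := by
        rw [sub_neg_eq_add]
        gcongr
        exact norm_second_difference_le_of_holder hγ hH hZ hZ' hξ
    _ = 2 * ((s + 2) * (c ^ (s + 1))⁻¹ * H) * ‖ξ‖ ^ (γ - s) := by
        rw [Real.rpow_sub hξ0, Real.rpow_one_add' hξ0.le (by positivity), Real.rpow_natCast,
          mul_pow, pow_succ ‖ξ‖]
        field_simp

variable [FiniteDimensional ℝ E] [MeasurableSpace E] [BorelSpace E] {ν : Measure E}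

lemma integrableOn_rieszKernel_sub [IsFiniteMeasureOnCompacts ν] (s : ℕ) (hc : 0 < c) (hε : 0 < ε)
    (hZ : ContinuousOn Z (ball a R)) (hZc : ∀ x ∈ ball a R, c * ‖x - a‖ ≤ ‖Z x - Z a‖) :
    IntegrableOn (fun ξ ↦ rieszKernel s (Z (a + ξ) - Z a)) (openAnnulus E ε R) ν := by
  have hmaps : MapsTo (a + ·) (openAnnulus E ε R) (ball a R) := fun ξ hξ ↦ by simpa using hξ.2
  have hlower : ∀ ξ ∈ openAnnulus E ε R, c * ε ≤ ‖Z (a + ξ) - Z a‖ := fun ξ hξ ↦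
    calc c * ε ≤ c * ‖a + ξ - a‖ := by rw [add_sub_cancel_left]; gcongr; exact hξ.1.le
      _ ≤ ‖Z (a + ξ) - Z a‖ := hZc _ (hmaps hξ)
  have hne : ∀ ξ ∈ openAnnulus E ε R, Z (a + ξ) - Z a ≠ 0 := fun ξ hξ ↦
    norm_pos_iff.1 ((mul_pos hc hε).trans_le (hlower ξ hξ))
  have hcont : ContinuousOn (fun ξ ↦ rieszKernel s (Z (a + ξ) - Z a)) (openAnnulus E ε R) :=
    (continuousOn_rieszKernel s).comp
      ((hZ.comp (continuous_const_add a).continuousOn hmaps).sub continuousOn_const) hne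
  have hfinite : ν (openAnnulus E ε R) < ⊤ :=
    (measure_mono openAnnulus_subset_ball).trans_lt measure_ball_lt_top
  refine .of_bound hfinite (hcont.aestronglyMeasurable measurableSet_openAnnulus) ((c * ε) ^ s)⁻¹
    (ae_restrict_of_forall_mem measurableSet_openAnnulus fun ξ hξ ↦ ?_)
  rw [norm_rieszKernel s (hne ξ hξ)]
  have := hlower ξ hξ
  gcongr

lemma integrableOn_ball_norm_rpow [ν.IsAddHaarMeasure] (hdim : 1 ≤ Module.finrank ℝ E) {α : ℝ}
    (hα : -(Module.finrank ℝ E : ℝ) < α) :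
    IntegrableOn (fun ξ : E ↦ ‖ξ‖ ^ α) (ball 0 R) ν := by
  refine integrableOn_ball_of_norm_le_rpow hdim (C := 1) (α := -α) (by linarith)
    (.of_forall fun ξ ↦ ?_) (measurable_norm.pow_const α).aestronglyMeasurable
  rw [one_mul, neg_neg, Real.norm_of_nonneg (by positivity)]

theorem pseudo_oddness_estimate_general [CompleteSpace F] [ν.IsAddHaarMeasure]
    (hdim : 1 ≤ Module.finrank ℝ E) {s : ℕ} (hs : s < Module.finrank ℝ E + γ) (hc : 0 < c)
    (hγ : 0 ≤ γ) (hH : 0 ≤ H) (hε : 0 < ε)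
    (hZc : ∀ x ∈ ball a R, c * ‖x - a‖ ≤ ‖Z x - Z a‖)
    (hZ : ∀ x ∈ ball a R, HasFDerivAt Z (Z' x) x)
    (hZ' : ∀ x ∈ ball a R, ‖Z' x - Z' a‖ ≤ H * ‖x - a‖ ^ γ) :
    ‖∫ ξ in openAnnulus E ε R, rieszKernel s (Z (a + ξ) - Z a) ∂ν‖ ≤
      (s + 2) * (c ^ (s + 1))⁻¹ * H * ∫ ξ in ball 0 R, ‖ξ‖ ^ (γ - s) ∂ν := by
  set K : ℝ := (s + 2) * (c ^ (s + 1))⁻¹ * H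
  have hint : IntegrableOn (fun ξ : E ↦ ‖ξ‖ ^ (γ - s)) (ball 0 R) ν :=
    integrableOn_ball_norm_rpow hdim (by linarith)
  have hkernel : IntegrableOn (fun ξ ↦ rieszKernel s (Z (a + ξ) - Z a)) (openAnnulus E ε R) ν :=
    integrableOn_rieszKernel_sub s hc hε (fun x hx ↦ (hZ x hx).continuousAt.continuousWithinAt) hZc
  calc ‖∫ ξ in openAnnulus E ε R, rieszKernel s (Z (a + ξ) - Z a) ∂ν‖
      ≤ 2⁻¹ * ∫ ξ in openAnnulus E ε R, 2 * K * ‖ξ‖ ^ (γ - s) ∂ν :=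
        norm_setIntegral_le_half_of_norm_add_neg_le neg_openAnnulus measurableSet_openAnnulus
          hkernel ((hint.mono_set openAnnulus_subset_ball).const_mul _) fun ξ hξ ↦ by
            simpa only [← sub_eq_add_neg] using norm_rieszKernel_add_rieszKernel_neg_le s hc hγ hH
              hZc hZ hZ' (hε.trans hξ.1) hξ.2
    _ = K * ∫ ξ in openAnnulus E ε R, ‖ξ‖ ^ (γ - s) ∂ν := by
        rw [integral_const_mul]; ring
    _ ≤ K * ∫ ξ in ball 0 R, ‖ξ‖ ^ (γ - s) ∂ν := by
        have hK : 0 ≤ K := by positivity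
        exact mul_le_mul_of_nonneg_left (setIntegral_mono_set hint
          (.of_forall fun ξ ↦ by positivity) openAnnulus_subset_ball.eventuallyLE) hK

end PseudoOddness

/-- Pseudo-oddness cancellation estimate for truncated integrals of the kernel
`(Z(a+ξ)-Z(a))/|Z(a+ξ)-Z(a)|^d`. -/
theorem pseudo_oddness_estimate
    (d : ℕ) (hd : 2 ≤ d) (γ : ℝ) (hγ : γ ∈ Set.Ioo (0:ℝ) 1)
    (μ L H r₀ : ℝ) (hμ : 1 ≤ μ) (hL : 0 < L) (hH : 0 < H) (hr₀ : 0 < r₀) :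
    ∃ C : ℝ, ∀ (a₀ : EuclideanSpace ℝ (Fin (d - 1)))
      (Z : EuclideanSpace ℝ (Fin (d - 1)) → EuclideanSpace ℝ (Fin d)),
      (∀ a ∈ Metric.ball a₀ (6 * r₀), DifferentiableAt ℝ Z a) →
      (∀ a ∈ Metric.ball a₀ (6 * r₀), ∀ b ∈ Metric.ball a₀ (6 * r₀),
        μ⁻¹ * ‖a - b‖ ≤ ‖Z a - Z b‖ ∧ ‖Z a - Z b‖ ≤ L * ‖a - b‖) →
      (∀ a ∈ Metric.ball a₀ (6 * r₀), ∀ b ∈ Metric.ball a₀ (6 * r₀),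
        ‖fderiv ℝ Z a - fderiv ℝ Z b‖ ≤ H * ‖a - b‖ ^ γ) →
      ∀ a ∈ Metric.ball a₀ (3 * r₀), ∀ ε : ℝ, 0 < ε → ε < 3 * r₀ →
        ‖∫ ξ in {ξ : EuclideanSpace ℝ (Fin (d - 1)) | ε < ‖ξ‖ ∧ ‖ξ‖ < 3 * r₀},
            (‖Z (a + ξ) - Z a‖ ^ d)⁻¹ • (Z (a + ξ) - Z a)‖ ≤ C := by
  obtain ⟨s, rfl⟩ := Nat.exists_eq_add_of_le' (one_le_two.trans hd)
  refine ⟨(s + 2) * (μ⁻¹ ^ (s + 1))⁻¹ * H *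
    ∫ ξ : EuclideanSpace ℝ (Fin s) in ball 0 (3 * r₀), ‖ξ‖ ^ (γ - s),
    fun a₀ Z hZ hbl hD a ha ε hε _ ↦ ?_⟩
  have hball : ball a (3 * r₀) ⊆ ball a₀ (6 * r₀) :=
    ball_subset_ball' (by linarith [mem_ball.1 ha])
  have ha' : a ∈ ball a₀ (6 * r₀) := hball (mem_ball_self (by positivity))
  exact pseudo_oddness_estimate_general (by simpa using hd) (by simpa using hγ.1)
    (inv_pos.2 (one_pos.trans_le hμ)) hγ.1.le hH.le hε (fun x hx ↦ (hbl x (hball hx) a ha').1)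
    (fun x hx ↦ (hZ x (hball hx)).hasFDerivAt) (fun x hx ↦ hD x (hball hx) a ha')
end
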